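/- For a nonunital channel E implemented repeatably with constant input I/d (the maximally mixed state), the number of repetitions n satisfies n ≤ log(dim H_M)/Δ, where Δ = S(I/d) − S(E(I/d)) > 0; hence any nonunital channel is at most ⌊log(dim H_M)/Δ⌋-repeatable with memory H_M. -/

import Mathlib

open Matrix Kronecker BigOperators
open scoped ComplexOrder

noncomputable def vnEntropy {n : Type*} [Fintype n] [DecidableEq n] (ρ : Matrix n n ℂ) : ℝ :=
  if h : ρ.IsHermitian then ∑ i, Real.negMulLog (h.eigenvalues i) else 0

def IsDensity {n : Type*} [Fintype n] [DecidableEq n] (ρ : Matrix n n ℂ) : Prop :=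
  ρ.PosSemidef ∧ ρ.trace = 1

def IsUnitary {n : Type*} [Fintype n] [DecidableEq n] (U : Matrix n n ℂ) : Prop :=
  U * Uᴴ = 1 ∧ Uᴴ * U = 1

noncomputable def ptraceMem {μ s : Type*} [Fintype μ] (X : Matrix (μ × s) (μ × s) ℂ) : Matrix s s ℂ :=
  Matrix.of fun i j => ∑ a, X (a, i) (a, j)

noncomputable def ptraceSys {μ s : Type*} [Fintype s] (X : Matrix (μ × s) (μ × s) ℂ) : Matrix μ μ ℂ :=
  Matrix.of fun a b => ∑ i, X (a, i) (b, i)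

noncomputable def inducedChan {μ s : Type*} [Fintype μ] [Fintype s]
    (U : Matrix (μ × s) (μ × s) ℂ) (ξ : Matrix μ μ ℂ) (ρ : Matrix s s ℂ) : Matrix s s ℂ :=
  ptraceMem (U * (ξ ⊗ₖ ρ) * Uᴴ)

noncomputable def memUpdate {μ s : Type*} [Fintype μ] [Fintype s]
    (U : Matrix (μ × s) (μ × s) ℂ) (ξ : Matrix μ μ ℂ) (ρ : Matrix s s ℂ) : Matrix μ μ ℂ :=
  ptraceSys (U * (ξ ⊗ₖ ρ) * Uᴴ)

def ctrlU {μ s : Type*} [DecidableEq μ] (Uf : μ → Matrix s s ℂ) : Matrix (μ × s) (μ × s) ℂ :=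
  Matrix.of fun p q => if p.1 = q.1 then Uf p.1 p.2 q.2 else 0

def extendMap {n m : Type*} [Fintype n] [DecidableEq n]
    (E : Matrix n n ℂ →ₗ[ℂ] Matrix n n ℂ) (ρ : Matrix (n × m) (n × m) ℂ) :
    Matrix (n × m) (n × m) ℂ :=
  Matrix.of fun p q => E (Matrix.of fun i j => ρ (i, p.2) (j, q.2)) p.1 q.1

def IsCP {n : Type*} [Fintype n] [DecidableEq n]
    (E : Matrix n n ℂ →ₗ[ℂ] Matrix n n ℂ) : Prop :=
  ∀ (k : ℕ) (ρ : Matrix (n × Fin k) (n × Fin k) ℂ), ρ.PosSemidef → (extendMap E ρ).PosSemidef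

def IsTP {n : Type*} [Fintype n] [DecidableEq n]
    (E : Matrix n n ℂ →ₗ[ℂ] Matrix n n ℂ) : Prop :=
  ∀ ρ, (E ρ).trace = ρ.trace

noncomputable def mlog {n : Type*} [Fintype n] [DecidableEq n] (ρ : Matrix n n ℂ) :
    Matrix n n ℂ :=
  if h : ρ.IsHermitian then
    (h.eigenvectorUnitary : Matrix n n ℂ) *
      Matrix.diagonal (fun i => (Real.log (h.eigenvalues i) : ℂ)) *
      (h.eigenvectorUnitary : Matrix n n ℂ)ᴴ
  else 0

noncomputable def relEntropy {n : Type*} [Fintype n] [DecidableEq n]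
    (ρ ω : Matrix n n ℂ) : ℝ :=
  ((ρ * (mlog ρ - mlog ω)).trace).re

/-!
A unitary preserves the total entropy `S(ξ) + S(ρ)` of the uncorrelated memory and system, while
subadditivity bounds it after the interaction by the sum of the entropies of the two reduced
states. Hence each use of the channel raises the entropy of the memory by at least the entropy
`S(ρ) - S(E(ρ))` lost by the system. The memory entropy stays between `0` and `log (dim H_M)`, and
on input `I / d` the loss is positive unless the output is again `I / d`, the unique state of
maximal entropy.

Subadditivity reduces to its classical counterpart: the diagonal of a density matrix in any basis
is the image of its spectrum under a doubly stochastic matrix, so its Shannon entropy is at least as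
large.
-/

section Shannon

open InformationTheory

variable {ι κ : Type*} [Fintype ι] [Fintype κ]

theorem mul_klFun_div {x y : ℝ} (h : y = 0 → x = 0) :
    y * klFun (x / y) = y - x - x * Real.log y - Real.negMulLog x := by
  rcases eq_or_ne x 0 with rfl | hx
  · simp [klFun_zero]
  · have hy : y ≠ 0 := mt h hx
    rw [klFun_apply, Real.log_div hx hy, Real.negMulLog]
    field_simp
    ring

theorem sum_mul_klFun_div {p q : ι → ℝ} (hpq : ∑ i, p i = ∑ i, q i)
    (hac : ∀ i, q i = 0 → p i = 0) :
    ∑ i, q i * klFun (p i / q i) =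
      -∑ i, p i * Real.log (q i) - ∑ i, Real.negMulLog (p i) := by
  simp only [mul_klFun_div (hac _), Finset.sum_sub_distrib, hpq, sub_self, zero_sub]

theorem sum_negMulLog_le_neg_sum_mul_log {p q : ι → ℝ} (hp : 0 ≤ p) (hq : 0 ≤ q)
    (hpq : ∑ i, p i = ∑ i, q i) (hac : ∀ i, q i = 0 → p i = 0) :
    ∑ i, Real.negMulLog (p i) ≤ -∑ i, p i * Real.log (q i) := by
  rw [← sub_nonneg, ← sum_mul_klFun_div hpq hac]
  exact Finset.sum_nonneg fun i _ => mul_nonneg (hq i) (klFun_nonneg (div_nonneg (hp i) (hq i)))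

theorem sum_negMulLog_lt_neg_sum_mul_log {p q : ι → ℝ} (hp : 0 ≤ p) (hq : 0 ≤ q)
    (hpq : ∑ i, p i = ∑ i, q i) (hac : ∀ i, q i = 0 → p i = 0) (hne : p ≠ q) :
    ∑ i, Real.negMulLog (p i) < -∑ i, p i * Real.log (q i) := by
  rw [← sub_pos, ← sum_mul_klFun_div hpq hac]
  have hdiv : ∀ i, 0 ≤ p i / q i := fun i => div_nonneg (hp i) (hq i)
  obtain ⟨i, hi⟩ := Function.ne_iff.mp hne
  have hqi : q i ≠ 0 := fun h => hi (by rw [hac i h, h])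
  have hkl : klFun (p i / q i) ≠ 0 := by
    rwa [Ne, klFun_eq_zero_iff (hdiv i), div_eq_one_iff_eq hqi]
  exact Finset.sum_pos' (fun j _ => mul_nonneg (hq j) (klFun_nonneg (hdiv j)))
    ⟨i, Finset.mem_univ i,
      mul_pos ((hq i).lt_of_ne' hqi) ((klFun_nonneg (hdiv i)).lt_of_ne' hkl)⟩

theorem nonempty_of_mem_stdSimplex {p : ι → ℝ} (hp : p ∈ stdSimplex ℝ ι) : Nonempty ι := by
  by_contra! h
  simpa using hp.2

theorem sum_negMulLog_inv_card [Nonempty ι] :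
    ∑ _ : ι, Real.negMulLog (Fintype.card ι : ℝ)⁻¹ = Real.log (Fintype.card ι) := by
  simp [Real.negMulLog]

theorem sum_negMulLog_lt_log_card {p : ι → ℝ} (hp : p ∈ stdSimplex ℝ ι)
    (hne : p ≠ fun _ => (Fintype.card ι : ℝ)⁻¹) :
    ∑ i, Real.negMulLog (p i) < Real.log (Fintype.card ι) := by
  have := nonempty_of_mem_stdSimplex hp
  calc ∑ i, Real.negMulLog (p i)
      < -∑ i, p i * Real.log (Fintype.card ι : ℝ)⁻¹ :=
        sum_negMulLog_lt_neg_sum_mul_log hp.1 (fun _ => by positivity) (by simp [hp.2])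
          (by simp) hne
    _ = Real.log (Fintype.card ι) := by simp [← Finset.sum_mul, hp.2]

theorem sum_negMulLog_le_log_card {p : ι → ℝ} (hp : p ∈ stdSimplex ℝ ι) :
    ∑ i, Real.negMulLog (p i) ≤ Real.log (Fintype.card ι) := by
  by_cases hu : p = fun _ => (Fintype.card ι : ℝ)⁻¹
  · have := nonempty_of_mem_stdSimplex hp
    rw [hu, sum_negMulLog_inv_card]
  · exact (sum_negMulLog_lt_log_card hp hu).le

theorem sum_negMulLog_nonneg {p : ι → ℝ} (hp : p ∈ stdSimplex ℝ ι) :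
    0 ≤ ∑ i, Real.negMulLog (p i) :=
  Finset.sum_nonneg fun i _ =>
    have hi := mem_Icc_of_mem_stdSimplex hp i
    Real.negMulLog_nonneg hi.1 hi.2

theorem sum_negMulLog_mul {p : ι → ℝ} {q : κ → ℝ} (hp : ∑ i, p i = 1) (hq : ∑ j, q j = 1) :
    ∑ x : ι × κ, Real.negMulLog (p x.1 * q x.2) =
      ∑ i, Real.negMulLog (p i) + ∑ j, Real.negMulLog (q j) := by
  simp only [Fintype.sum_prod_type, Real.negMulLog_mul, Finset.sum_add_distrib,
    ← Finset.sum_mul, ← Finset.mul_sum, hp, hq, one_mul]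

/-- Gibbs' inequality applied to the product of the marginals. -/
theorem sum_negMulLog_le_add_marginals {P : ι × κ → ℝ} (hP : P ∈ stdSimplex ℝ (ι × κ)) :
    ∑ x, Real.negMulLog (P x) ≤
      ∑ i, Real.negMulLog (∑ j, P (i, j)) + ∑ j, Real.negMulLog (∑ i, P (i, j)) := by
  set p : ι → ℝ := fun i => ∑ j, P (i, j) with hp
  set q : κ → ℝ := fun j => ∑ i, P (i, j) with hq
  have hp0 : 0 ≤ p := fun i => Finset.sum_nonneg fun j _ => hP.1 (i, j)
  have hq0 : 0 ≤ q := fun j => Finset.sum_nonneg fun i _ => hP.1 (i, j)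
  have hp1 : ∑ i, p i = 1 := by rw [← hP.2, Fintype.sum_prod_type]
  have hq1 : ∑ j, q j = 1 := by rw [← hP.2, Fintype.sum_prod_type_right]
  have hpP : ∀ i j, p i = 0 → P (i, j) = 0 := fun i j h =>
    (Finset.sum_eq_zero_iff_of_nonneg fun j _ => hP.1 (i, j)).mp h j (Finset.mem_univ j)
  have hqP : ∀ i j, q j = 0 → P (i, j) = 0 := fun i j h =>
    (Finset.sum_eq_zero_iff_of_nonneg fun i _ => hP.1 (i, j)).mp h i (Finset.mem_univ i)
  have hlog : ∀ i j, P (i, j) * Real.log (p i * q j) =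
      P (i, j) * Real.log (p i) + P (i, j) * Real.log (q j) := by
    intro i j
    by_cases hij : P (i, j) = 0
    · simp [hij]
    · rw [Real.log_mul (mt (hpP i j) hij) (mt (hqP i j) hij), mul_add]
  calc ∑ x, Real.negMulLog (P x)
      ≤ -∑ x : ι × κ, P x * Real.log (p x.1 * q x.2) := by
        refine sum_negMulLog_le_neg_sum_mul_log hP.1
          (fun x => mul_nonneg (hp0 x.1) (hq0 x.2)) ?_ ?_
        · simp [Fintype.sum_prod_type, ← Finset.mul_sum, hp1, hq1, hP.2]
        · rintro ⟨i, j⟩ h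
          exact (mul_eq_zero.mp h).elim (hpP i j) (hqP i j)
    _ = -(∑ i, p i * Real.log (p i) + ∑ j, q j * Real.log (q j)) := by
        simp only [Fintype.sum_prod_type, hlog, Finset.sum_add_distrib]
        congr 2
        · simp only [hp, Finset.sum_mul]
        · rw [Finset.sum_comm]
          simp only [hq, Finset.sum_mul]
    _ = ∑ i, Real.negMulLog (p i) + ∑ j, Real.negMulLog (q j) := by
        simp only [Real.negMulLog_eq_neg, Finset.sum_neg_distrib, neg_add]

theorem sum_le_sum_mulVec_of_mem_doublyStochastic [DecidableEq ι] {S : Set ℝ} {f : ℝ → ℝ}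
    (hf : ConcaveOn ℝ S f) {M : Matrix ι ι ℝ} (hM : M ∈ doublyStochastic ℝ ι) {d : ι → ℝ}
    (hd : ∀ i, d i ∈ S) : ∑ i, f (d i) ≤ ∑ i, f ((M *ᵥ d) i) :=
  calc ∑ j, f (d j) = ∑ j, ∑ i, M i j * f (d j) := by
        simp only [← Finset.sum_mul, sum_col_of_mem_doublyStochastic hM, one_mul]
    _ = ∑ i, ∑ j, M i j • f (d j) := Finset.sum_comm
    _ ≤ ∑ i, f ((M *ᵥ d) i) := Finset.sum_le_sum fun i _ =>
        hf.le_map_sum (fun _ _ => nonneg_of_mem_doublyStochastic hM)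
          (sum_row_of_mem_doublyStochastic hM i) fun j _ => hd j

end Shannon

section Unitary

theorem conjTranspose_kronecker_mul_kronecker_mul_kronecker {m n : Type*} [Fintype m]
    [Fintype n] (V ξ : Matrix m m ℂ) (W ρ : Matrix n n ℂ) :
    (V ⊗ₖ W)ᴴ * (ξ ⊗ₖ ρ) * (V ⊗ₖ W) = (Vᴴ * ξ * V) ⊗ₖ (Wᴴ * ρ * W) := by
  rw [conjTranspose_kronecker, ← mul_kronecker_mul, ← mul_kronecker_mul]

variable {n : Type*} [Fintype n] [DecidableEq n]

theorem IsUnitary.mem_unitaryGroup {U : Matrix n n ℂ} (hU : IsUnitary U) :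
    U ∈ unitaryGroup n ℂ :=
  ⟨hU.2, hU.1⟩

theorem map_normSq_mem_doublyStochastic {V : Matrix n n ℂ} (hV : V ∈ unitaryGroup n ℂ) :
    V.map Complex.normSq ∈ doublyStochastic ℝ n := by
  refine mem_doublyStochastic_iff_sum.mpr ⟨fun i j => Complex.normSq_nonneg _, fun i => ?_,
    fun j => ?_⟩
  · have h : (V * Vᴴ) i i = 1 := by
      rw [← star_eq_conjTranspose, hV.2, one_apply_eq]
    simp only [mul_apply, conjTranspose_apply, RCLike.star_def, Complex.mul_conj] at h
    exact_mod_cast h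
  · have h : (Vᴴ * V) j j = 1 := by
      rw [← star_eq_conjTranspose, hV.1, one_apply_eq]
    simp only [mul_apply, conjTranspose_apply, RCLike.star_def,
      ← Complex.normSq_eq_conj_mul_self] at h
    exact_mod_cast h

theorem conjTranspose_eigenvectorUnitary_mul_mul {ρ : Matrix n n ℂ} (hρ : ρ.IsHermitian) :
    (hρ.eigenvectorUnitary : Matrix n n ℂ)ᴴ * ρ * hρ.eigenvectorUnitary =
      diagonal fun i => (hρ.eigenvalues i : ℂ) := by
  simpa [Unitary.conjStarAlgAut_apply, star_eq_conjTranspose, Function.comp_def] using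
    hρ.conjStarAlgAut_star_eigenvectorUnitary

theorem re_diag_eq_map_normSq_mulVec {ρ : Matrix n n ℂ} (hρ : ρ.IsHermitian) (i : n) :
    (ρ i i).re =
      ((hρ.eigenvectorUnitary : Matrix n n ℂ).map Complex.normSq *ᵥ hρ.eigenvalues) i := by
  set V := (hρ.eigenvectorUnitary : Matrix n n ℂ)
  have hspec : ρ = V * diagonal (fun j => (hρ.eigenvalues j : ℂ)) * Vᴴ := by
    conv_lhs => rw [hρ.spectral_theorem, Unitary.conjStarAlgAut_apply]
    rfl
  have hentry : ρ i i = ∑ j, ((Complex.normSq (V i j) * hρ.eigenvalues j : ℝ) : ℂ) := by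
    conv_lhs => rw [hspec, mul_apply]
    refine Finset.sum_congr rfl fun j _ => ?_
    rw [mul_diagonal, conjTranspose_apply, RCLike.star_def, mul_right_comm, Complex.mul_conj,
      Complex.ofReal_mul]
  rw [hentry, ← Complex.ofReal_sum, Complex.ofReal_re]
  rfl

end Unitary

section PartialTrace

variable {m n : Type*}

theorem ptraceMem_eq_ptraceSys_submatrix_swap [Fintype m] (X : Matrix (m × n) (m × n) ℂ) :
    ptraceMem X = ptraceSys (X.submatrix Prod.swap Prod.swap) :=
  rfl

theorem posSemidef_ptraceSys [Fintype n] {X : Matrix (m × n) (m × n) ℂ} (hX : X.PosSemidef) :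
    (ptraceSys X).PosSemidef := by
  have hsum : ptraceSys X = ∑ i, X.submatrix (fun a => (a, i)) (fun a => (a, i)) := by
    ext a b
    simp [ptraceSys, Matrix.sum_apply]
  rw [hsum]
  exact posSemidef_sum _ fun i _ => hX.submatrix _

theorem posSemidef_ptraceMem [Fintype m] {X : Matrix (m × n) (m × n) ℂ} (hX : X.PosSemidef) :
    (ptraceMem X).PosSemidef :=
  posSemidef_ptraceSys (hX.submatrix Prod.swap)

variable [Fintype m] [Fintype n]

theorem trace_ptraceSys (X : Matrix (m × n) (m × n) ℂ) : (ptraceSys X).trace = X.trace :=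
  (Fintype.sum_prod_type fun x => X x x).symm

theorem ptraceSys_kronecker_one_mul [DecidableEq n] (A : Matrix m m ℂ)
    (X : Matrix (m × n) (m × n) ℂ) :
    ptraceSys ((A ⊗ₖ (1 : Matrix n n ℂ)) * X) = A * ptraceSys X := by
  ext a b
  simp only [ptraceSys, of_apply, mul_apply, kroneckerMap_apply, Fintype.sum_prod_type,
    one_apply, mul_ite, mul_one, mul_zero, ite_mul, zero_mul, Finset.sum_ite_eq,
    Finset.mem_univ, if_true, Finset.mul_sum]
  exact Finset.sum_comm

theorem ptraceSys_mul_kronecker_one [DecidableEq n] (A : Matrix m m ℂ)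
    (X : Matrix (m × n) (m × n) ℂ) :
    ptraceSys (X * (A ⊗ₖ (1 : Matrix n n ℂ))) = ptraceSys X * A := by
  ext a b
  simp only [ptraceSys, of_apply, mul_apply, kroneckerMap_apply, Fintype.sum_prod_type,
    one_apply, mul_ite, mul_one, mul_zero, Finset.sum_ite_eq', Finset.mem_univ, if_true,
    Finset.sum_mul]
  exact Finset.sum_comm

theorem ptraceSys_one_kronecker_mul_comm [DecidableEq m] (B : Matrix n n ℂ)
    (X : Matrix (m × n) (m × n) ℂ) :
    ptraceSys (((1 : Matrix m m ℂ) ⊗ₖ B) * X) = ptraceSys (X * ((1 : Matrix m m ℂ) ⊗ₖ B)) := by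
  ext a b
  simp only [ptraceSys, of_apply, mul_apply, kroneckerMap_apply, Fintype.sum_prod_type_right,
    one_apply, ite_mul, one_mul, zero_mul, mul_ite, mul_zero, Finset.sum_ite_eq,
    Finset.sum_ite_eq', Finset.mem_univ, if_true]
  rw [Finset.sum_comm]
  simp only [mul_comm]

theorem ptraceSys_conjTranspose_kronecker_mul_mul [DecidableEq n] (A : Matrix m m ℂ)
    {B : Matrix n n ℂ} (hB : B ∈ unitaryGroup n ℂ) (X : Matrix (m × n) (m × n) ℂ) :
    ptraceSys ((A ⊗ₖ B)ᴴ * X * (A ⊗ₖ B)) = Aᴴ * ptraceSys X * A := by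
  classical
  have hBB : ((1 : Matrix m m ℂ) ⊗ₖ B) * ((1 : Matrix m m ℂ) ⊗ₖ Bᴴ) = 1 := by
    rw [← mul_kronecker_mul, one_mul, ← star_eq_conjTranspose, hB.2, one_kronecker_one]
  have hsplit : A ⊗ₖ B = ((1 : Matrix m m ℂ) ⊗ₖ B) * (A ⊗ₖ (1 : Matrix n n ℂ)) := by
    rw [← mul_kronecker_mul, one_mul, mul_one]
  calc ptraceSys ((A ⊗ₖ B)ᴴ * X * (A ⊗ₖ B))
      = ptraceSys ((Aᴴ ⊗ₖ (1 : Matrix n n ℂ)) *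
          (((1 : Matrix m m ℂ) ⊗ₖ Bᴴ) * (X * ((1 : Matrix m m ℂ) ⊗ₖ B))) *
          (A ⊗ₖ (1 : Matrix n n ℂ))) := by
        simp only [hsplit, conjTranspose_mul, conjTranspose_kronecker, conjTranspose_one,
          Matrix.mul_assoc]
    _ = Aᴴ * ptraceSys (((1 : Matrix m m ℂ) ⊗ₖ Bᴴ) * (X * ((1 : Matrix m m ℂ) ⊗ₖ B))) * A := by
        rw [ptraceSys_mul_kronecker_one, ptraceSys_kronecker_one_mul]
    _ = Aᴴ * ptraceSys X * A := by
        rw [ptraceSys_one_kronecker_mul_comm, Matrix.mul_assoc X, hBB, Matrix.mul_one]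

theorem ptraceMem_conjTranspose_kronecker_mul_mul [DecidableEq m] {A : Matrix m m ℂ}
    (B : Matrix n n ℂ) (hA : A ∈ unitaryGroup m ℂ) (X : Matrix (m × n) (m × n) ℂ) :
    ptraceMem ((A ⊗ₖ B)ᴴ * X * (A ⊗ₖ B)) = Bᴴ * ptraceMem X * B := by
  have hswap : (A ⊗ₖ B).submatrix (Equiv.prodComm n m) (Equiv.prodComm n m) = B ⊗ₖ A := by
    ext x y
    simp [mul_comm]
  simp only [ptraceMem_eq_ptraceSys_submatrix_swap, ← Equiv.coe_prodComm]
  rw [← ptraceSys_conjTranspose_kronecker_mul_mul B hA, ← hswap, conjTranspose_submatrix,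
    submatrix_mul_equiv, submatrix_mul_equiv]

end PartialTrace

section Density

variable {m n : Type*} [Fintype m] [DecidableEq m] [Fintype n] [DecidableEq n]

/-- The maximally mixed state `I / d` on a system with basis `n`, where `d = card n`. -/
noncomputable def maximallyMixed (n : Type*) [Fintype n] [DecidableEq n] : Matrix n n ℂ :=
  (Fintype.card n : ℂ)⁻¹ • 1

theorem maximallyMixed_eq_diagonal :
    maximallyMixed n = diagonal fun _ => (((Fintype.card n : ℝ)⁻¹ : ℝ) : ℂ) := by
  rw [maximallyMixed, smul_one_eq_diagonal]
  push_cast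
  rfl

theorem map_maximallyMixed_eq_iff [Nonempty n] (E : Matrix n n ℂ →ₗ[ℂ] Matrix n n ℂ) :
    E (maximallyMixed n) = maximallyMixed n ↔ E 1 = 1 := by
  have hcard : (Fintype.card n : ℂ)⁻¹ ≠ 0 :=
    inv_ne_zero (Nat.cast_ne_zero.mpr Fintype.card_ne_zero)
  rw [maximallyMixed, map_smul, (smul_right_injective _ hcard).eq_iff]

theorem isDensity_maximallyMixed [Nonempty n] : IsDensity (maximallyMixed n) := by
  refine ⟨PosSemidef.one.smul (inv_nonneg.mpr (Nat.cast_nonneg _)), ?_⟩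
  simp [maximallyMixed]

theorem IsCP.posSemidef_map {E : Matrix n n ℂ →ₗ[ℂ] Matrix n n ℂ} (hE : IsCP E)
    {X : Matrix n n ℂ} (hX : X.PosSemidef) : (E X).PosSemidef :=
  (hE 1 (X.submatrix Prod.fst Prod.fst) (hX.submatrix _)).submatrix fun i => (i, 0)

namespace IsDensity

variable {ρ : Matrix n n ℂ} {ξ : Matrix m m ℂ}

theorem isHermitian (hρ : IsDensity ρ) : ρ.IsHermitian :=
  hρ.1.isHermitian

theorem eigenvalues_mem_stdSimplex (hρ : IsDensity ρ) :
    hρ.isHermitian.eigenvalues ∈ stdSimplex ℝ n := by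
  refine ⟨hρ.1.eigenvalues_nonneg, ?_⟩
  have htrace : ((∑ i, hρ.isHermitian.eigenvalues i : ℝ) : ℂ) = 1 := by
    rw [Complex.ofReal_sum, ← hρ.2]
    exact hρ.isHermitian.trace_eq_sum_eigenvalues.symm
  exact_mod_cast htrace

theorem re_diag_mem_stdSimplex (hρ : IsDensity ρ) :
    (fun i => (ρ i i).re) ∈ stdSimplex ℝ n := by
  refine ⟨fun i => (Complex.le_def.mp hρ.1.diag_nonneg).1, ?_⟩
  simpa [trace] using congrArg Complex.re hρ.2

protected theorem map {E : Matrix n n ℂ →ₗ[ℂ] Matrix n n ℂ} (hCP : IsCP E) (hTP : IsTP E)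
    (hρ : IsDensity ρ) : IsDensity (E ρ) :=
  ⟨hCP.posSemidef_map hρ.1, (hTP ρ).trans hρ.2⟩

theorem conj {V : Matrix n n ℂ} (hV : V ∈ unitaryGroup n ℂ) (hρ : IsDensity ρ) :
    IsDensity (V * ρ * Vᴴ) := by
  refine ⟨hρ.1.mul_mul_conjTranspose_same V, ?_⟩
  rw [trace_mul_comm, ← Matrix.mul_assoc, ← star_eq_conjTranspose, hV.1, Matrix.one_mul, hρ.2]

protected theorem kronecker (hξ : IsDensity ξ) (hρ : IsDensity ρ) : IsDensity (ξ ⊗ₖ ρ) :=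
  ⟨hξ.1.kronecker hρ.1, by rw [trace_kronecker, hξ.2, hρ.2, one_mul]⟩

protected theorem ptraceSys {X : Matrix (m × n) (m × n) ℂ} (hX : IsDensity X) :
    IsDensity (ptraceSys X) :=
  ⟨posSemidef_ptraceSys hX.1, (trace_ptraceSys X).trans hX.2⟩

protected theorem memUpdate {U : Matrix (m × n) (m × n) ℂ} (hU : U ∈ unitaryGroup (m × n) ℂ)
    (hξ : IsDensity ξ) (hρ : IsDensity ρ) : IsDensity (memUpdate U ξ ρ) :=
  ((hξ.kronecker hρ).conj hU).ptraceSys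

end IsDensity

end Density

section Entropy

variable {m n : Type*} [Fintype m] [DecidableEq m] [Fintype n] [DecidableEq n]

theorem vnEntropy_eq_sum_negMulLog_eigenvalues {ρ : Matrix n n ℂ} (hρ : ρ.IsHermitian) :
    vnEntropy ρ = ∑ i, Real.negMulLog (hρ.eigenvalues i) :=
  dif_pos hρ

theorem vnEntropy_diagonal (d : n → ℝ) :
    vnEntropy (diagonal fun i => (d i : ℂ)) = ∑ i, Real.negMulLog (d i) := by
  have hd : (diagonal fun i => (d i : ℂ)).IsHermitian :=
    isHermitian_diagonal_of_self_adjoint _ (funext fun i => Complex.conj_ofReal (d i))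
  have hroots : Finset.univ.val.map (fun i => (d i : ℂ)) =
      Finset.univ.val.map (fun i => (hd.eigenvalues i : ℂ)) := by
    rw [← Polynomial.roots_multiset_prod_X_sub_C (Finset.univ.val.map fun i => (d i : ℂ)),
      Multiset.map_map]
    exact (congrArg Polynomial.roots (charpoly_diagonal _).symm).trans
      hd.roots_charpoly_eq_eigenvalues
  rw [vnEntropy_eq_sum_negMulLog_eigenvalues hd]
  simpa [Multiset.map_map, Function.comp_def] using
    congrArg (fun r => (r.map fun z : ℂ => Real.negMulLog z.re).sum) hroots.symm

theorem vnEntropy_conj {ρ V : Matrix n n ℂ} (hρ : ρ.IsHermitian) (hV : V ∈ unitaryGroup n ℂ) :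
    vnEntropy (V * ρ * Vᴴ) = vnEntropy ρ := by
  have hconj : (V * ρ * Vᴴ).IsHermitian := isHermitian_mul_mul_conjTranspose V hρ
  have hcharpoly : (V * ρ * Vᴴ).charpoly = ρ.charpoly := by
    rw [charpoly_mul_comm, ← Matrix.mul_assoc, ← star_eq_conjTranspose, hV.1, Matrix.one_mul]
  rw [vnEntropy_eq_sum_negMulLog_eigenvalues hconj, vnEntropy_eq_sum_negMulLog_eigenvalues hρ,
    (hconj.eigenvalues_eq_eigenvalues_iff hρ).mpr hcharpoly]

theorem vnEntropy_conj' {ρ V : Matrix n n ℂ} (hρ : ρ.IsHermitian) (hV : V ∈ unitaryGroup n ℂ) :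
    vnEntropy (Vᴴ * ρ * V) = vnEntropy ρ := by
  simpa only [star_eq_conjTranspose, conjTranspose_conjTranspose] using
    vnEntropy_conj hρ (Unitary.star_mem hV)

theorem vnEntropy_maximallyMixed [Nonempty n] :
    vnEntropy (maximallyMixed n) = Real.log (Fintype.card n) := by
  rw [maximallyMixed_eq_diagonal, vnEntropy_diagonal, sum_negMulLog_inv_card]

theorem vnEntropy_le_sum_negMulLog_re_diag {ρ : Matrix n n ℂ} (hρ : ρ.PosSemidef) :
    vnEntropy ρ ≤ ∑ i, Real.negMulLog (ρ i i).re := by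
  rw [vnEntropy_eq_sum_negMulLog_eigenvalues hρ.isHermitian]
  simp only [re_diag_eq_map_normSq_mulVec hρ.isHermitian]
  exact sum_le_sum_mulVec_of_mem_doublyStochastic Real.concaveOn_negMulLog
    (map_normSq_mem_doublyStochastic (SetLike.coe_mem _)) hρ.eigenvalues_nonneg

namespace IsDensity

variable {ρ : Matrix n n ℂ} {ξ : Matrix m m ℂ}

theorem vnEntropy_nonneg (hρ : IsDensity ρ) : 0 ≤ vnEntropy ρ := by
  rw [vnEntropy_eq_sum_negMulLog_eigenvalues hρ.isHermitian]
  exact sum_negMulLog_nonneg hρ.eigenvalues_mem_stdSimplex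

theorem vnEntropy_le_log_card (hρ : IsDensity ρ) : vnEntropy ρ ≤ Real.log (Fintype.card n) := by
  rw [vnEntropy_eq_sum_negMulLog_eigenvalues hρ.isHermitian]
  exact sum_negMulLog_le_log_card hρ.eigenvalues_mem_stdSimplex

theorem vnEntropy_lt_log_card (hρ : IsDensity ρ) (hne : ρ ≠ maximallyMixed n) :
    vnEntropy ρ < Real.log (Fintype.card n) := by
  rw [vnEntropy_eq_sum_negMulLog_eigenvalues hρ.isHermitian]
  refine sum_negMulLog_lt_log_card hρ.eigenvalues_mem_stdSimplex fun huniform => hne ?_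
  have hdiag : diagonal (RCLike.ofReal ∘ hρ.isHermitian.eigenvalues) = maximallyMixed n := by
    rw [huniform]
    exact maximallyMixed_eq_diagonal.symm
  rw [hρ.isHermitian.spectral_theorem, hdiag, maximallyMixed, map_smul, map_one]

theorem vnEntropy_kronecker (hξ : IsDensity ξ) (hρ : IsDensity ρ) :
    vnEntropy (ξ ⊗ₖ ρ) = vnEntropy ξ + vnEntropy ρ := by
  have hVW := kronecker_mem_unitary (SetLike.coe_mem hξ.isHermitian.eigenvectorUnitary)
    (SetLike.coe_mem hρ.isHermitian.eigenvectorUnitary)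
  rw [← vnEntropy_conj' (hξ.kronecker hρ).isHermitian hVW,
    conjTranspose_kronecker_mul_kronecker_mul_kronecker,
    conjTranspose_eigenvectorUnitary_mul_mul, conjTranspose_eigenvectorUnitary_mul_mul,
    diagonal_kronecker_diagonal]
  simp only [← Complex.ofReal_mul]
  rw [vnEntropy_diagonal, vnEntropy_eq_sum_negMulLog_eigenvalues hξ.isHermitian,
    vnEntropy_eq_sum_negMulLog_eigenvalues hρ.isHermitian]
  exact sum_negMulLog_mul hξ.eigenvalues_mem_stdSimplex.2 hρ.eigenvalues_mem_stdSimplex.2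

/-- In a product of eigenbases of the two reduced states, the diagonal of `X` is a joint
distribution whose marginals are the spectra of the reduced states. -/
theorem vnEntropy_le_ptraceSys_add_ptraceMem {X : Matrix (m × n) (m × n) ℂ} (hX : IsDensity X) :
    vnEntropy X ≤ vnEntropy (ptraceSys X) + vnEntropy (ptraceMem X) := by
  have hA := (posSemidef_ptraceSys hX.1).isHermitian
  have hB := (posSemidef_ptraceMem hX.1).isHermitian
  set V := (hA.eigenvectorUnitary : Matrix m m ℂ) with hV
  set W := (hB.eigenvectorUnitary : Matrix n n ℂ) with hW
  have hVmem : V ∈ unitaryGroup m ℂ := SetLike.coe_mem _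
  have hWmem : W ∈ unitaryGroup n ℂ := SetLike.coe_mem _
  have hVW := kronecker_mem_unitary hVmem hWmem
  set Y := (V ⊗ₖ W)ᴴ * X * (V ⊗ₖ W) with hY
  have hYdens : IsDensity Y := by
    simpa only [star_eq_conjTranspose, conjTranspose_conjTranspose] using
      hX.conj (Unitary.star_mem hVW)
  have hrow : ∀ a, ∑ i, (Y (a, i) (a, i)).re = hA.eigenvalues a := fun a =>
    calc ∑ i, (Y (a, i) (a, i)).re = (ptraceSys Y a a).re := by simp [ptraceSys]
      _ = hA.eigenvalues a := by
        rw [hY, ptraceSys_conjTranspose_kronecker_mul_mul V hWmem, hV,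
          conjTranspose_eigenvectorUnitary_mul_mul, diagonal_apply_eq, Complex.ofReal_re]
  have hcol : ∀ i, ∑ a, (Y (a, i) (a, i)).re = hB.eigenvalues i := fun i =>
    calc ∑ a, (Y (a, i) (a, i)).re = (ptraceMem Y i i).re := by simp [ptraceMem]
      _ = hB.eigenvalues i := by
        rw [hY, ptraceMem_conjTranspose_kronecker_mul_mul W hVmem, hW,
          conjTranspose_eigenvectorUnitary_mul_mul, diagonal_apply_eq, Complex.ofReal_re]
  calc vnEntropy X = vnEntropy Y := (vnEntropy_conj' hX.isHermitian hVW).symm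
    _ ≤ ∑ x, Real.negMulLog (Y x x).re := vnEntropy_le_sum_negMulLog_re_diag hYdens.1
    _ ≤ ∑ a, Real.negMulLog (∑ i, (Y (a, i) (a, i)).re) +
          ∑ i, Real.negMulLog (∑ a, (Y (a, i) (a, i)).re) :=
        sum_negMulLog_le_add_marginals hYdens.re_diag_mem_stdSimplex
    _ = vnEntropy (ptraceSys X) + vnEntropy (ptraceMem X) := by
        simp only [hrow, hcol, vnEntropy_eq_sum_negMulLog_eigenvalues hA,
          vnEntropy_eq_sum_negMulLog_eigenvalues hB]

theorem vnEntropy_add_le_memUpdate_add_inducedChan (hξ : IsDensity ξ) (hρ : IsDensity ρ)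
    {U : Matrix (m × n) (m × n) ℂ} (hU : U ∈ unitaryGroup (m × n) ℂ) :
    vnEntropy ξ + vnEntropy ρ ≤
      vnEntropy (memUpdate U ξ ρ) + vnEntropy (inducedChan U ξ ρ) := by
  have hξρ := hξ.kronecker hρ
  rw [← hξ.vnEntropy_kronecker hρ, ← vnEntropy_conj hξρ.isHermitian hU]
  exact (hξρ.conj hU).vnEntropy_le_ptraceSys_add_ptraceMem

end IsDensity

end Entropy

section Repeatability

variable {μ s : Type*} [Fintype μ] [DecidableEq μ] [Fintype s] [DecidableEq s]
  {U : ℕ → Matrix (μ × s) (μ × s) ℂ} {ξ : ℕ → Matrix μ μ ℂ}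

theorem sum_vnEntropy_sub_inducedChan_le_log_card {ρ : ℕ → Matrix s s ℂ}
    (hU : ∀ k, U k ∈ unitaryGroup (μ × s) ℂ) (hρ : ∀ k, IsDensity (ρ k)) (hξ : IsDensity (ξ 0))
    (hrec : ∀ k, ξ (k + 1) = memUpdate (U k) (ξ k) (ρ k)) (n : ℕ) :
    ∑ k ∈ Finset.range n, (vnEntropy (ρ k) - vnEntropy (inducedChan (U k) (ξ k) (ρ k))) ≤
      Real.log (Fintype.card μ) := by
  have hdens : ∀ k, IsDensity (ξ k) := by
    intro k
    induction k with
    | zero => exact hξ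
    | succ k ih => exact hrec k ▸ ih.memUpdate (hU k) (hρ k)
  calc ∑ k ∈ Finset.range n, (vnEntropy (ρ k) - vnEntropy (inducedChan (U k) (ξ k) (ρ k)))
      ≤ ∑ k ∈ Finset.range n, (vnEntropy (ξ (k + 1)) - vnEntropy (ξ k)) := by
        refine Finset.sum_le_sum fun k _ => ?_
        have hstep := (hdens k).vnEntropy_add_le_memUpdate_add_inducedChan (hρ k) (hU k)
        rw [← hrec k] at hstep
        linarith
    _ = vnEntropy (ξ n) - vnEntropy (ξ 0) := Finset.sum_range_sub (fun k => vnEntropy (ξ k)) n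
    _ ≤ vnEntropy (ξ n) := sub_le_self _ hξ.vnEntropy_nonneg
    _ ≤ Real.log (Fintype.card μ) := (hdens n).vnEntropy_le_log_card

/-- Here `τ` is the output `E (I / d)` of the channel. -/
theorem nonunital_bounded_repeatability_general {τ : Matrix s s ℂ}
    (hτ : IsDensity τ) (hne : τ ≠ maximallyMixed s) (hU : ∀ k, U k ∈ unitaryGroup (μ × s) ℂ)
    (hξ : IsDensity (ξ 0)) (hrec : ∀ k, ξ (k + 1) = memUpdate (U k) (ξ k) (maximallyMixed s))
    {n : ℕ} (hrep : ∀ k < n, inducedChan (U k) (ξ k) (maximallyMixed s) = τ) :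
    0 < Real.log (Fintype.card s) - vnEntropy τ ∧
      (n : ℝ) ≤ Real.log (Fintype.card μ) / (Real.log (Fintype.card s) - vnEntropy τ) := by
  have := nonempty_of_mem_stdSimplex hτ.eigenvalues_mem_stdSimplex
  have hpos : 0 < Real.log (Fintype.card s) - vnEntropy τ :=
    sub_pos.mpr (hτ.vnEntropy_lt_log_card hne)
  refine ⟨hpos, (le_div_iff₀ hpos).mpr ?_⟩
  calc (n : ℝ) * (Real.log (Fintype.card s) - vnEntropy τ)
      = ∑ k ∈ Finset.range n, (vnEntropy (maximallyMixed s) -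
          vnEntropy (inducedChan (U k) (ξ k) (maximallyMixed s))) := by
        rw [Finset.sum_congr rfl fun k hk => by rw [hrep k (Finset.mem_range.mp hk)]]
        simp only [vnEntropy_maximallyMixed, Finset.sum_const, Finset.card_range, nsmul_eq_mul]
    _ ≤ Real.log (Fintype.card μ) :=
        sum_vnEntropy_sub_inducedChan_le_log_card hU (fun _ => isDensity_maximallyMixed) hξ hrec n

end Repeatability

theorem nonunital_bounded_repeatability
    {μ s : Type*} [Fintype μ] [DecidableEq μ] [Fintype s] [DecidableEq s]
    [Nonempty μ] [Nonempty s]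
    (E : Matrix s s ℂ →ₗ[ℂ] Matrix s s ℂ)
    (hCP : IsCP E) (hTP : IsTP E) (hnonunital : E 1 ≠ 1)
    (U : Matrix (μ × s) (μ × s) ℂ) (hU : IsUnitary U)
    (ξseq : ℕ → Matrix μ μ ℂ) (hξ0 : IsDensity (ξseq 0))
    (hrec : ∀ k, ξseq (k + 1) =
      memUpdate U (ξseq k) ((Fintype.card s : ℂ)⁻¹ • (1 : Matrix s s ℂ)))
    (n : ℕ)
    (hrep : ∀ k < n, inducedChan U (ξseq k) ((Fintype.card s : ℂ)⁻¹ • (1 : Matrix s s ℂ)) =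
      E ((Fintype.card s : ℂ)⁻¹ • (1 : Matrix s s ℂ)))
    (Δ : ℝ)
    (hΔ : Δ = Real.log (Fintype.card s) -
      vnEntropy (E ((Fintype.card s : ℂ)⁻¹ • (1 : Matrix s s ℂ)))) :
    0 < Δ ∧ (n : ℝ) ≤ Real.log (Fintype.card μ) / Δ := by
  subst hΔ
  exact nonunital_bounded_repeatability_general (isDensity_maximallyMixed.map hCP hTP)
    (mt (map_maximallyMixed_eq_iff E).mp hnonunital) (fun _ => hU.mem_unitaryGroup) hξ0 hrec hrep
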